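/- arXiv:2211.05460 — 2 statements merged into one kernel-verified Lean document; each statement's English description precedes it below -/
import Mathlib

section
/- Let d_{n,2}(q) = Σ_{w ∈ F_{n,2}} q^{deg₂(w)} ∈ ℤ[q]. Then for all n ≥ 3, d_{n,2}(q) = d_{n−1,2}(q) + q²·d_{n−2,2}(q), with initial values d_{1,2}(q) = 2q⁴ and d_{2,2}(q) = q⁴ + 2q⁵. Moreover, for all n ≥ 2, d_{n,2}(q) = Σ_{i=1}^{n} ( C(n−1−⌊i/2⌋, ⌊(i−1)/2⌋) + C(n−2−⌊(i−1)/2⌋, ⌊(i−2)/2⌋) )·q^{i+3}, where C(a,b) denotes the binomial coefficient of integers with C(a,b) = 0 whenever b < 0 or b > a, and ⌊·⌋ is the integer floor. -/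
open Finset

/-- Number of `1`s in a binary word. -/
def wOnes (w : List Bool) : ℕ := w.count true

/-- Indicator of `w₁ = c` (first letter). -/
def indHead (c : Bool) (w : List Bool) : ℕ := if w.head? = some c then 1 else 0

/-- Indicator of `wₙ = c` (last letter). -/
def indLast (c : Bool) (w : List Bool) : ℕ := if w.getLast? = some c then 1 else 0

/-- The set `F_{n,2}` of binary words of length `n` avoiding two consecutive `1`s. -/
def kbonWords (n k : ℕ) : Finset (Fin n → Bool) :=
  Finset.univ.filter (fun w => ¬ (List.replicate k true <:+: List.ofFn w))

/-- Number of degree-2 vertices of the Fibonacci graph of `w`: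
`deg₂(w) = 2 + 2s(w) + [w₁ = 0] + [wₙ = 0]`. -/
def wDeg2 (w : List Bool) : ℕ := 2 + 2 * wOnes w + indHead false w + indLast false w

/-- `d_{n,2}(q) = Σ_{w ∈ F_{n,2}} q^{deg₂(w)} ∈ ℤ[q]`. -/
noncomputable def dpoly2 (n : ℕ) : Polynomial ℤ :=
  ∑ w ∈ kbonWords n 2, Polynomial.X ^ wDeg2 (List.ofFn w)

/-- Binomial coefficient of integers: `chooseZ a b = C(a,b)`, which is `0` whenever
`b < 0` or `b > a`. -/
def chooseZ (a b : ℤ) : ℤ := if 0 ≤ b ∧ b ≤ a then (Nat.choose a.toNat b.toNat : ℤ) else 0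

/-!
A nonempty word avoiding `11` is `1`, or has the form `0v` or `10v` with `v` again avoiding `11`.
In the last two cases `deg₂` is `3` resp. `4` plus a quantity depending only on `v`, the *tail
degree*; the latter is unchanged by a prefix `0` and raised by `2` by a prefix `10`. So the
generating polynomials `t_n` of the tail degree satisfy `t_{n+2} = t_{n+1} + q² t_n`, and
`d_{n+2} = q³ t_{n+1} + q⁴ t_n` inherits this recurrence. By Pascal's rule the binomial
coefficients obey it too; as the rule fails at `C(0, 0)`, their recurrence only starts at `n = 4`
and the cases `n = 2, 3` are compared by hand.
-/

open Polynomial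

section Words

theorem cons_infix_cons_iff_of_ne {α : Type*} {a b : α} (hab : a ≠ b) (p l : List α) :
    a :: p <:+: b :: l ↔ a :: p <:+: l := by
  simp [List.infix_cons_iff, List.cons_prefix_cons, hab]

theorem true_true_infix_true_false_cons_iff (l : List Bool) :
    [true, true] <:+: true :: false :: l ↔ [true, true] <:+: l := by
  rw [List.infix_cons_iff, cons_infix_cons_iff_of_ne (by decide)]
  simp [List.cons_prefix_cons]

theorem sum_ofFn_succ {α M : Type*} [Fintype α] [AddCommMonoid M] (n : ℕ) (f : List α → M) :
    ∑ w : Fin (n + 1) → α, f (List.ofFn w) =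
      ∑ a, ∑ w : Fin n → α, f (a :: List.ofFn w) := by
  rw [← (Fin.consEquiv fun _ : Fin (n + 1) ↦ α).sum_comp, Fintype.sum_prod_type]
  simp [Fin.consEquiv, List.ofFn_succ]

theorem kbonWords_eq_univ_of_lt {n k : ℕ} (h : n < k) : kbonWords n k = univ := by
  refine filter_true_of_mem fun w _ hw ↦ h.not_ge ?_
  simpa using hw.length_le

theorem sum_kbonWords {M : Type*} [AddCommMonoid M] (n k : ℕ) (f : List Bool → M) :
    ∑ w ∈ kbonWords n k, f (List.ofFn w) = ∑ w : Fin n → Bool,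
      if List.replicate k true <:+: List.ofFn w then 0 else f (List.ofFn w) := by
  simp only [kbonWords, sum_filter, ite_not]

theorem sum_kbonWords_two_succ_succ {M : Type*} [AddCommMonoid M] (n : ℕ) (f : List Bool → M) :
    ∑ w ∈ kbonWords (n + 2) 2, f (List.ofFn w) =
      ∑ w ∈ kbonWords (n + 1) 2, f (false :: List.ofFn w) +
        ∑ w ∈ kbonWords n 2, f (true :: false :: List.ofFn w) := by
  have hff (l : List Bool) : [true, true] <:+: false :: l ↔ [true, true] <:+: l :=
    cons_infix_cons_iff_of_ne (by decide) _ _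
  have htt (l : List Bool) : [true, true] <:+: true :: true :: l := ⟨[], l, rfl⟩
  let g (l : List Bool) : M := if [true, true] <:+: l then 0 else f l
  calc ∑ w ∈ kbonWords (n + 2) 2, f (List.ofFn w)
    _ = ∑ w : Fin (n + 1) → Bool, g (true :: List.ofFn w) +
          ∑ w : Fin (n + 1) → Bool, g (false :: List.ofFn w) := by
      rw [sum_kbonWords, ← Fintype.sum_bool fun a ↦ ∑ w, g (a :: List.ofFn w)]
      exact sum_ofFn_succ (n + 1) g
    _ = ∑ w : Fin n → Bool, g (true :: false :: List.ofFn w) +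
          ∑ w : Fin (n + 1) → Bool, g (false :: List.ofFn w) := by
      rw [sum_ofFn_succ n fun l ↦ g (true :: l), Fintype.sum_bool]
      simp [g, htt]
    _ = _ := by
      rw [add_comm, sum_kbonWords (n + 1) 2 fun l ↦ f (false :: l),
        sum_kbonWords n 2 fun l ↦ f (true :: false :: l)]
      simp only [g, hff, true_true_infix_true_false_cons_iff, List.replicate]

end Words

section Degree

/-- The part of `deg₂` of a word `0v` or `10v` that depends on `v` only: `2s(v)`, plus `1` if the
word ends in `0`. The prefixed `0` covers the case of empty `v`. -/
def tailDeg (v : List Bool) : ℕ := 2 * wOnes v + indLast false (false :: v)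

theorem tailDeg_false_cons (v : List Bool) : tailDeg (false :: v) = tailDeg v := by
  simp [tailDeg, wOnes, indLast]

theorem tailDeg_true_false_cons (v : List Bool) :
    tailDeg (true :: false :: v) = tailDeg v + 2 := by
  simp only [tailDeg, wOnes, indLast, List.getLast?_cons_cons, List.count_cons_self,
    List.count_cons_of_ne Bool.false_ne_true]
  ring

theorem wDeg2_false_cons (v : List Bool) : wDeg2 (false :: v) = tailDeg v + 3 := by
  simp only [wDeg2, tailDeg, wOnes, indHead, List.head?_cons, if_true,
    List.count_cons_of_ne Bool.false_ne_true]
  ring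

theorem wDeg2_true_false_cons (v : List Bool) :
    wDeg2 (true :: false :: v) = tailDeg v + 4 := by
  have hhead : indHead false (true :: false :: v) = 0 := by simp [indHead]
  simp only [wDeg2, tailDeg, hhead, wOnes, indLast, List.getLast?_cons_cons,
    List.count_cons_self, List.count_cons_of_ne Bool.false_ne_true]
  ring

end Degree

section Recurrence

/-- The generating polynomial `t_n` of the tail degree over `F_{n,2}`. -/
noncomputable def tailPoly (n : ℕ) : ℤ[X] := ∑ w ∈ kbonWords n 2, X ^ tailDeg (List.ofFn w)

theorem tailPoly_zero : tailPoly 0 = X := by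
  simp [tailPoly, kbonWords_eq_univ_of_lt, tailDeg, wOnes, indLast]

theorem tailPoly_one : tailPoly 1 = X + X ^ 2 := by
  rw [tailPoly, kbonWords_eq_univ_of_lt one_lt_two, sum_ofFn_succ 0 fun l ↦ X ^ tailDeg l]
  simp [tailDeg, wOnes, indLast, add_comm]

theorem tailPoly_add_two (n : ℕ) : tailPoly (n + 2) = tailPoly (n + 1) + X ^ 2 * tailPoly n := by
  simp only [tailPoly, sum_kbonWords_two_succ_succ n fun l ↦ (X : ℤ[X]) ^ tailDeg l,
    tailDeg_false_cons, tailDeg_true_false_cons, pow_add, ← sum_mul, mul_comm (X ^ 2)]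

theorem dpoly2_add_two (n : ℕ) :
    dpoly2 (n + 2) = X ^ 3 * tailPoly (n + 1) + X ^ 4 * tailPoly n := by
  simp only [dpoly2, tailPoly, sum_kbonWords_two_succ_succ n fun l ↦ (X : ℤ[X]) ^ wDeg2 l,
    wDeg2_false_cons, wDeg2_true_false_cons, pow_add, ← sum_mul, mul_comm (X ^ 3), mul_comm (X ^ 4)]

theorem dpoly2_one : dpoly2 1 = 2 * X ^ 4 := by
  rw [dpoly2, kbonWords_eq_univ_of_lt one_lt_two, sum_ofFn_succ 0 fun l ↦ X ^ wDeg2 l]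
  simp [wDeg2, wOnes, indHead, indLast, two_mul]

theorem dpoly2_two : dpoly2 2 = X ^ 4 + 2 * X ^ 5 := by
  rw [dpoly2_add_two, tailPoly_zero, tailPoly_one]
  ring

theorem dpoly2_add_three (n : ℕ) : dpoly2 (n + 3) = dpoly2 (n + 2) + X ^ 2 * dpoly2 (n + 1) := by
  cases n with
  | zero =>
    rw [dpoly2_one, dpoly2_add_two, dpoly2_two, tailPoly_add_two, tailPoly_zero, tailPoly_one]
    ring
  | succ n =>
    simp only [dpoly2_add_two, tailPoly_add_two]
    ring

end Recurrence

section Binomial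

theorem chooseZ_eq_zero {a b : ℤ} (h : b < 0 ∨ a < b) : chooseZ a b = 0 :=
  if_neg (by omega)

theorem chooseZ_natCast (a b : ℕ) : chooseZ a b = a.choose b := by
  rcases le_or_gt b a with hba | hab
  · simp [chooseZ, hba]
  · rw [chooseZ_eq_zero (by omega), Nat.choose_eq_zero_of_lt hab, Nat.cast_zero]

theorem chooseZ_zero_right {a : ℤ} (ha : 0 ≤ a) : chooseZ a 0 = 1 := by
  simp [chooseZ, ha]

theorem chooseZ_succ_succ {a b : ℤ} (h : a ≠ -1 ∨ b ≠ -1) :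
    chooseZ (a + 1) (b + 1) = chooseZ a b + chooseZ a (b + 1) := by
  rcases lt_or_ge a 0 with ha | ha
  · rw [chooseZ_eq_zero (by omega), chooseZ_eq_zero (by omega), chooseZ_eq_zero (by omega),
      add_zero]
  rcases lt_trichotomy b (-1) with hb | rfl | hb
  · rw [chooseZ_eq_zero (by omega), chooseZ_eq_zero (by omega), chooseZ_eq_zero (by omega),
      add_zero]
  · rw [neg_add_cancel, chooseZ_zero_right ha, chooseZ_zero_right (by omega),
      chooseZ_eq_zero (by omega), zero_add]
  · lift a to ℕ using ha
    lift b to ℕ using by omega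
    simp only [← Nat.cast_succ, chooseZ_natCast, Nat.choose_succ_succ', Nat.cast_add]

/-- The coefficient of `q^(i+3)` in the closed form of `d_{n,2}(q)`. On `ℤ`, `/ 2` is the floor;
integer arguments avoid truncated subtraction and let `i - 2` be negative in the recurrence. -/
def deg2Coeff (n i : ℤ) : ℤ :=
  chooseZ (n - 1 - i / 2) ((i - 1) / 2) + chooseZ (n - 2 - (i - 1) / 2) ((i - 2) / 2)

theorem deg2Coeff_eq_zero {n i : ℤ} (h : i ≤ 0 ∨ n < i) : deg2Coeff n i = 0 := by
  rw [deg2Coeff, chooseZ_eq_zero (by omega), chooseZ_eq_zero (by omega), add_zero]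

theorem deg2Coeff_add_two {n : ℤ} (hn : 2 ≤ n) (i : ℤ) :
    deg2Coeff (n + 2) i = deg2Coeff (n + 1) i + deg2Coeff n (i - 2) := by
  have pascal_left : chooseZ (n + 2 - 1 - i / 2) ((i - 1) / 2) =
      chooseZ (n - 1 - (i - 2) / 2) ((i - 2 - 1) / 2) +
        chooseZ (n + 1 - 1 - i / 2) ((i - 1) / 2) := by
    convert chooseZ_succ_succ (a := n - i / 2) (b := (i - 1) / 2 - 1) (by omega) using 3 <;> omega
  have pascal_right : chooseZ (n + 2 - 2 - (i - 1) / 2) ((i - 2) / 2) =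
      chooseZ (n - 2 - (i - 2 - 1) / 2) ((i - 2 - 2) / 2) +
        chooseZ (n + 1 - 2 - (i - 1) / 2) ((i - 2) / 2) := by
    convert chooseZ_succ_succ (a := n - 1 - (i - 1) / 2) (b := (i - 2) / 2 - 1) (by omega)
      using 3 <;> omega
  simp only [deg2Coeff, pascal_left, pascal_right]
  ring

/-- The closed form of `d_{n,2}(q)`. -/
noncomputable def deg2Sum (n : ℕ) : ℤ[X] := ∑ i ∈ Icc 1 n, C (deg2Coeff n i) * X ^ (i + 3)

theorem deg2Sum_eq_sum_range {n N : ℕ} (h : n < N) :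
    deg2Sum n = ∑ i ∈ range N, C (deg2Coeff n i) * X ^ (i + 3) := by
  refine sum_subset (fun i hi ↦ ?_) fun i _ hi ↦ ?_
  · simp only [mem_Icc, mem_range] at hi ⊢
    omega
  · rw [mem_Icc] at hi
    rw [deg2Coeff_eq_zero (by omega), C_0, zero_mul]

theorem X_sq_mul_deg2Sum (n : ℕ) :
    X ^ 2 * deg2Sum n = ∑ i ∈ range (n + 3), C (deg2Coeff n (i - 2)) * X ^ (i + 3) := by
  rw [sum_range_succ', sum_range_succ', deg2Sum_eq_sum_range n.lt_succ_self, mul_sum]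
  simp only [Nat.cast_add, Nat.cast_one, Nat.cast_zero,
    deg2Coeff_eq_zero (n := n) (i := 0 - 2) (by omega),
    deg2Coeff_eq_zero (n := n) (i := 0 + 1 - 2) (by omega), C_0, zero_mul, add_zero]
  refine sum_congr rfl fun i _ ↦ ?_
  rw [show (i : ℤ) + 1 + 1 - 2 = i by ring]
  ring

theorem deg2Sum_add_two {n : ℕ} (hn : 2 ≤ n) :
    deg2Sum (n + 2) = deg2Sum (n + 1) + X ^ 2 * deg2Sum n := by
  rw [deg2Sum_eq_sum_range (Nat.lt_succ_self (n + 2)),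
    deg2Sum_eq_sum_range (by omega : n + 1 < n + 3), X_sq_mul_deg2Sum, ← sum_add_distrib]
  refine sum_congr rfl fun i _ ↦ ?_
  push_cast
  rw [deg2Coeff_add_two (by exact_mod_cast hn), C_add, add_mul]

theorem dpoly2_eq_deg2Sum {n : ℕ} (hn : 2 ≤ n) : dpoly2 n = deg2Sum n := by
  obtain ⟨n, rfl⟩ := Nat.exists_eq_add_of_le' hn
  induction n using Nat.twoStepInduction with
  | zero =>
    have coeffs : deg2Coeff 2 1 = 1 ∧ deg2Coeff 2 2 = 2 := by decide
    simp [dpoly2_two, deg2Sum, sum_Icc_succ_top, coeffs]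
  | one =>
    have coeffs : deg2Coeff 3 1 = 1 ∧ deg2Coeff 3 2 = 2 ∧ deg2Coeff 3 3 = 2 := by decide
    have sum_three : deg2Sum 3 = X ^ 4 + 2 * X ^ 5 + 2 * X ^ 6 := by
      simp [deg2Sum, sum_Icc_succ_top, coeffs]
    rw [dpoly2_add_three, dpoly2_two, dpoly2_one, sum_three]
    ring
  | more n ih ih' =>
    rw [dpoly2_add_three, ih (by omega), ih' (by omega), ← deg2Sum_add_two (by omega)]

end Binomial

theorem fibonacci_degree2_polynomial :
    (∀ n : ℕ, 3 ≤ n →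
      dpoly2 n = dpoly2 (n - 1) + Polynomial.X ^ 2 * dpoly2 (n - 2))
    ∧ dpoly2 1 = 2 * Polynomial.X ^ 4
    ∧ dpoly2 2 = Polynomial.X ^ 4 + 2 * Polynomial.X ^ 5
    ∧ ∀ n : ℕ, 2 ≤ n →
        dpoly2 n = ∑ i ∈ Finset.Icc 1 n,
          Polynomial.C
            (chooseZ ((n : ℤ) - 1 - Int.fdiv (i : ℤ) 2) (Int.fdiv ((i : ℤ) - 1) 2)
              + chooseZ ((n : ℤ) - 2 - Int.fdiv ((i : ℤ) - 1) 2) (Int.fdiv ((i : ℤ) - 2) 2))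
            * Polynomial.X ^ (i + 3) := by
  refine ⟨fun n hn ↦ ?_, dpoly2_one, dpoly2_two, fun n hn ↦ ?_⟩
  · obtain ⟨m, rfl⟩ := Nat.exists_eq_add_of_le' hn
    exact dpoly2_add_three m
  · simp only [dpoly2_eq_deg2Sum hn, deg2Sum, deg2Coeff, Int.fdiv_eq_ediv_of_nonneg _ zero_le_two]
end

section
/- Among the total degrees of vertices of all Fibonacci graphs on words of length n, the proportion of vertices of degree 4 tends to (7 − √5)/22 as n → ∞; that is, lim_{n→∞} ( Σ_{w ∈ F_{n,2}} deg₄(w) ) / ( Σ_{w ∈ F_{n,2}} ver(w) ) = (7 − √5)/22. -/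
open Finset Filter

/-- Number of vertices of the Fibonacci graph of `w`: `ver(w) = 2n + 2 + 2s(w)`. -/
def wVer (n : ℕ) (w : List Bool) : ℕ := 2 * n + 2 + 2 * wOnes w

/-- Number of degree-4 vertices: `deg₄(w) = 2s(w) − [w₁ = 1] − [wₙ = 1]`. -/
def wDeg4 (w : List Bool) : ℕ := 2 * wOnes w - indHead true w - indLast true w

/-- Number of degree-3 vertices: `deg₃(w) = ver(w) − deg₂(w) − deg₄(w)`. -/
def wDeg3 (n : ℕ) (w : List Bool) : ℕ := wVer n w - wDeg2 w - wDeg4 w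

/-!
A Fibonacci word of length at least two starts with `0` or with `10`, and deleting this prefix
leaves an arbitrary shorter Fibonacci word. Hence there are `F_(n+2)` words of length `n`, and the
total number of ones in them satisfies a Fibonacci recurrence with forcing term `F_(n+2)`, whose
solution is `(n F_(n+1) + 2 (n+1) F_n) / 5`. As `F_(n+1) / F_(n+2) → -ψ`, a letter of a random word
is `1` with asymptotic probability `δ = (5 - √5) / 10`. The two end letters change `deg₄` by at most
`2`, so per letter the mean of `deg₄` tends to `2δ` and the mean of `ver` to `2 + 2δ`.
-/

open scoped BigOperators Topology goldenRatio

theorem sum_fin_succ_arrow {α M : Type*} [Fintype α] [AddCommMonoid M] {n : ℕ}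
    (f : (Fin (n + 1) → α) → M) :
    ∑ w, f w = ∑ a, ∑ w : Fin n → α, f (Fin.cons a w) := by
  rw [← (Fin.consEquiv fun _ => α).sum_comp, Fintype.sum_prod_type]
  rfl

section Infix

variable {α : Type*} {a b : α}

theorem replicate_infix_cons_of_ne (hab : a ≠ b) (k : ℕ) (l : List α) :
    List.replicate k a <:+: b :: l ↔ List.replicate k a <:+: l := by
  cases k <;> simp [List.infix_cons_iff, List.replicate_succ, hab]

theorem replicate_two_infix_cons_cons_of_ne (hab : a ≠ b) (l : List α) :
    List.replicate 2 a <:+: a :: b :: l ↔ List.replicate 2 a <:+: l := by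
  simp [List.infix_cons_iff, List.replicate_succ, hab]

theorem replicate_two_infix_cons_cons_self (a : α) (l : List α) :
    List.replicate 2 a <:+: a :: a :: l :=
  (List.prefix_append [a, a] l).isInfix

end Infix

section Sum

variable {M : Type*} [AddCommMonoid M]

theorem sum_kbonWords_eq_sum_ite (n k : ℕ) (f : List Bool → M) :
    ∑ w ∈ kbonWords n k, f (List.ofFn w) =
      ∑ w : Fin n → Bool,
        if List.replicate k true <:+: List.ofFn w then 0 else f (List.ofFn w) := by
  simp only [kbonWords, sum_filter, ite_not]

theorem sum_kbonWords_succ (n k : ℕ) (f : List Bool → M) :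
    ∑ w ∈ kbonWords (n + 1) k, f (List.ofFn w) =
      (∑ w : Fin n → Bool,
        if List.replicate k true <:+: true :: List.ofFn w then 0 else f (true :: List.ofFn w)) +
      ∑ w ∈ kbonWords n k, f (false :: List.ofFn w) := by
  rw [sum_kbonWords_eq_sum_ite, sum_fin_succ_arrow, Fintype.sum_bool,
    sum_kbonWords_eq_sum_ite n k fun l => f (false :: l)]
  simp only [List.ofFn_cons, replicate_infix_cons_of_ne Bool.false_ne_true.symm]

theorem sum_kbonWords_two_add_two (n : ℕ) (f : List Bool → M) :
    ∑ w ∈ kbonWords (n + 2) 2, f (List.ofFn w) =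
      ∑ w ∈ kbonWords n 2, f (true :: false :: List.ofFn w) +
      ∑ w ∈ kbonWords (n + 1) 2, f (false :: List.ofFn w) := by
  rw [sum_kbonWords_succ, sum_fin_succ_arrow, Fintype.sum_bool,
    sum_kbonWords_eq_sum_ite n 2 fun l => f (true :: false :: l)]
  simp only [List.ofFn_cons, replicate_two_infix_cons_cons_self,
    replicate_two_infix_cons_cons_of_ne Bool.false_ne_true.symm, if_true,
    sum_const_zero, zero_add]

end Sum

theorem card_kbonWords_two (n : ℕ) : #(kbonWords n 2) = Nat.fib (n + 2) := by
  induction n using Nat.twoStepInduction with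
  | zero => decide
  | one => decide
  | more n ih₀ ih₁ =>
    rw [card_eq_sum_ones] at ih₀ ih₁ ⊢
    rw [sum_kbonWords_two_add_two n fun _ => 1, ih₀, ih₁, Nat.fib_add_two (n := n + 2)]

theorem kbonWords_two_nonempty (n : ℕ) : (kbonWords n 2).Nonempty := by
  rw [← card_pos, card_kbonWords_two]
  exact Nat.fib_pos.2 (by lia)

theorem wOnes_cons (b : Bool) (l : List Bool) : wOnes (b :: l) = wOnes l + b.toNat := by
  cases b <;> simp [wOnes]

theorem five_mul_sum_kbonWords_two_wOnes (n : ℕ) :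
    5 * ∑ w ∈ kbonWords n 2, wOnes (List.ofFn w) =
      n * Nat.fib (n + 1) + 2 * (n + 1) * Nat.fib n := by
  induction n using Nat.twoStepInduction with
  | zero => decide
  | one => decide
  | more n ih₀ ih₁ =>
    have sum_rec : ∑ w ∈ kbonWords (n + 2) 2, wOnes (List.ofFn w) =
        ∑ w ∈ kbonWords n 2, wOnes (List.ofFn w) + Nat.fib (n + 2) +
          ∑ w ∈ kbonWords (n + 1) 2, wOnes (List.ofFn w) := by
      rw [sum_kbonWords_two_add_two n wOnes]
      simp only [wOnes_cons, sum_add_distrib, sum_const, card_kbonWords_two, Bool.toNat_true,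
        Bool.toNat_false, smul_eq_mul, mul_one, add_zero]
    rw [sum_rec, mul_add, mul_add, ih₀, ih₁]
    simp only [Nat.fib_add_two (n := n + 1), Nat.fib_add_two (n := n), add_assoc, Nat.reduceAdd]
    ring

-- Only one ratio of Fibonacci numbers occurs: `F_n / F_(n+2) = 1 - F_(n+1) / F_(n+2)`.
theorem expect_wOnes_div {n : ℕ} (hn : n ≠ 0) :
    (𝔼 w ∈ kbonWords n 2, (wOnes (List.ofFn w) : ℝ)) / n =
      ((Nat.fib (n + 1) / Nat.fib (n + 2) : ℝ) +
        2 * (1 + 1 / n) * (1 - Nat.fib (n + 1) / Nat.fib (n + 2))) / 5 := by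
  have fib_ne_zero : (Nat.fib (n + 2) : ℝ) ≠ 0 := by simp
  have fib_rec : (Nat.fib (n + 2) : ℝ) = Nat.fib n + Nat.fib (n + 1) := by
    exact_mod_cast Nat.fib_add_two
  have sum_eq : 5 * ∑ w ∈ kbonWords n 2, (wOnes (List.ofFn w) : ℝ) =
      n * Nat.fib (n + 1) + 2 * (n + 1) * Nat.fib n := by
    exact_mod_cast five_mul_sum_kbonWords_two_wOnes n
  rw [expect_eq_sum_div_card, card_kbonWords_two]
  field_simp
  rw [mul_comm, sum_eq, fib_rec]
  ring

theorem tendsto_expect_wOnes_div :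
    Tendsto (fun n : ℕ => (𝔼 w ∈ kbonWords n 2, (wOnes (List.ofFn w) : ℝ)) / n)
      atTop (𝓝 ((5 - √5) / 10)) := by
  have fib_ratio : Tendsto (fun n : ℕ => (Nat.fib (n + 1) / Nat.fib (n + 2) : ℝ)) atTop (𝓝 (-ψ)) :=
    tendsto_fib_div_fib_succ_atTop.comp (tendsto_add_atTop_nat 1)
  have limit_eq : (5 - √5) / 10 = (-ψ + 2 * (1 + 0) * (1 - -ψ)) / 5 := by
    rw [Real.goldenConj]
    ring
  rw [limit_eq]
  refine Tendsto.congr' ?_ ((fib_ratio.add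
    (((tendsto_one_div_atTop_nhds_zero_nat.const_add 1).const_mul 2).mul
      (fib_ratio.const_sub 1))).div_const 5)
  filter_upwards [eventually_ne_atTop 0] with n hn using (expect_wOnes_div hn).symm

theorem wDeg4_le_two_mul_wOnes (l : List Bool) : wDeg4 l ≤ 2 * wOnes l := by
  unfold wDeg4
  lia

theorem two_mul_wOnes_le_wDeg4_add_two (l : List Bool) : 2 * wOnes l ≤ wDeg4 l + 2 := by
  unfold wDeg4 indHead indLast
  split_ifs <;> lia

theorem expect_wDeg4_le_two_mul_expect_wOnes (n : ℕ) :
    𝔼 w ∈ kbonWords n 2, (wDeg4 (List.ofFn w) : ℝ) ≤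
      2 * 𝔼 w ∈ kbonWords n 2, (wOnes (List.ofFn w) : ℝ) := by
  rw [mul_expect]
  exact expect_le_expect fun w _ => by exact_mod_cast wDeg4_le_two_mul_wOnes _

theorem two_mul_expect_wOnes_le_expect_wDeg4_add_two (n : ℕ) :
    2 * 𝔼 w ∈ kbonWords n 2, (wOnes (List.ofFn w) : ℝ) ≤
      (𝔼 w ∈ kbonWords n 2, (wDeg4 (List.ofFn w) : ℝ)) + 2 :=
  calc
    _ = 𝔼 w ∈ kbonWords n 2, 2 * (wOnes (List.ofFn w) : ℝ) := mul_expect _ _ _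
    _ ≤ 𝔼 w ∈ kbonWords n 2, ((wDeg4 (List.ofFn w) : ℝ) + 2) :=
      expect_le_expect fun w _ => by exact_mod_cast two_mul_wOnes_le_wDeg4_add_two _
    _ = _ := by rw [expect_add_distrib, expect_const (kbonWords_two_nonempty n)]

theorem expect_wVer (n : ℕ) :
    𝔼 w ∈ kbonWords n 2, (wVer n (List.ofFn w) : ℝ) =
      2 * n + 2 + 2 * 𝔼 w ∈ kbonWords n 2, (wOnes (List.ofFn w) : ℝ) := by
  simp [wVer, expect_add_distrib, kbonWords_two_nonempty, ← mul_expect]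

theorem tendsto_expect_wDeg4_div :
    Tendsto (fun n : ℕ => (𝔼 w ∈ kbonWords n 2, (wDeg4 (List.ofFn w) : ℝ)) / n)
      atTop (𝓝 (2 * ((5 - √5) / 10))) := by
  have upper := tendsto_expect_wOnes_div.const_mul 2
  have lower := upper.sub (tendsto_const_div_atTop_nhds_zero_nat 2)
  rw [sub_zero] at lower
  refine tendsto_of_tendsto_of_tendsto_of_le_of_le lower upper (fun n => ?_) fun n => ?_
  · simp only [← mul_div_assoc, ← sub_div]
    gcongr
    linarith [two_mul_expect_wOnes_le_expect_wDeg4_add_two n]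
  · simp only [← mul_div_assoc]
    gcongr
    exact expect_wDeg4_le_two_mul_expect_wOnes n

theorem tendsto_expect_wVer_div :
    Tendsto (fun n : ℕ => (𝔼 w ∈ kbonWords n 2, (wVer n (List.ofFn w) : ℝ)) / n)
      atTop (𝓝 (2 + 2 * ((5 - √5) / 10))) := by
  have lim := ((tendsto_const_div_atTop_nhds_zero_nat (2 : ℝ)).const_add 2).add
    (tendsto_expect_wOnes_div.const_mul 2)
  rw [add_zero] at lim
  refine lim.congr' ?_
  filter_upwards [eventually_ne_atTop 0] with n hn
  rw [expect_wVer]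
  field_simp

theorem degree4_proportion :
    Tendsto
      (fun n : ℕ =>
        ((∑ w ∈ kbonWords n 2, (wDeg4 (List.ofFn w) : ℝ)) /
          (∑ w ∈ kbonWords n 2, (wVer n (List.ofFn w) : ℝ))))
      atTop (nhds ((7 - Real.sqrt 5) / 22)) := by
  have sqrt_lt : √5 < 15 := by rw [Real.sqrt_lt'] <;> norm_num
  have limit_eq : (7 - √5) / 22 = 2 * ((5 - √5) / 10) / (2 + 2 * ((5 - √5) / 10)) := by
    rw [eq_div_iff (by linarith)]
    linarith [Real.sq_sqrt (show (0 : ℝ) ≤ 5 by norm_num)]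
  rw [limit_eq]
  refine (tendsto_expect_wDeg4_div.div tendsto_expect_wVer_div (by linarith)).congr' ?_
  filter_upwards [eventually_ne_atTop 0] with n hn
  have card_ne_zero : (#(kbonWords n 2) : ℝ) ≠ 0 := by
    exact_mod_cast (kbonWords_two_nonempty n).card_ne_zero
  simp only [Pi.div_apply, expect_eq_sum_div_card]
  rw [div_div_div_cancel_right₀ (by exact_mod_cast hn), div_div_div_cancel_right₀ card_ne_zero]
end
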